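/- Let L be a finite-dimensional symmetric Leibniz algebra over any field. Then all one-dimensional subalgebras of L are c-ideals of L if and only if either (i) L³ = 0, or (ii) L = A ⊕ B where A is an abelian ideal of L and B is an almost abelian Lie ideal of L. -/

import Mathlib

/-!
Write `W = [L,L]`. Comparing the left and right Leibniz identities shows that elements of `W`
anticommute with all of `L`; together with `[[x,y],[x,y]] = 0` this makes every element of `W`
square to zero, so it spans a subalgebra.

A one-dimensional subalgebra not contained in `W` is always a c-ideal, since any complementary
hyperplane containing `W` is an ideal. A one-dimensional subspace of `W` lies in every ideal of
which it could be a complement, so it is a c-ideal exactly when it is an ideal. Hence the left-hand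
side of the theorem says that every vector of `W` is an eigenvector of every right multiplication
(`cIdeal_iff`), i.e. that each right multiplication acts on `W` as a scalar (`exists_scalar`).

If all these scalars vanish then `L³ = 0`. Otherwise some `x` acts as the identity on `W`, and the
annihilator `K` of `W` in `L` satisfies `L = Fx + K`. All squares vanish: `[x,[y,y]] = 0` by the
left Leibniz identity and anticommutation, while `[x,[y,y]] = -[y,y]`. So `L` is a Lie algebra, and
the Leibniz identity for `k, k', x` gives `[K,K] = 0`. Right multiplication by `x` is then a
projection of `K` onto `W`; its kernel on `K` is the abelian ideal `A`, and `B = Fx + W`.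
-/

open Submodule

variable {F : Type*} [Field F] {L : Type*} [AddCommGroup L] [Module F L]

/-- `br` is a (right) Leibniz bracket: the right multiplications are derivations. -/
def IsLeibnizBracket (br : L →ₗ[F] L →ₗ[F] L) : Prop :=
  ∀ x y z : L, br x (br y z) = br (br x y) z - br (br x z) y

/-- A symmetric Leibniz bracket: right and left Leibniz, and `[[x,y],[x,y]] = 0`. -/
def IsSymmetricLeibnizBracket (br : L →ₗ[F] L →ₗ[F] L) : Prop :=
  IsLeibnizBracket br ∧
  (∀ x y z : L, br x (br y z) = br (br x y) z + br y (br x z)) ∧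
  (∀ x y : L, br (br x y) (br x y) = 0)

/-- `B` is a subalgebra (a submodule closed under the bracket). -/
def IsSubalg (br : L →ₗ[F] L →ₗ[F] L) (B : Submodule F L) : Prop :=
  ∀ x ∈ B, ∀ y ∈ B, br x y ∈ B

/-- `A` is an ideal of the subalgebra `B`. -/
def IsIdealOf (br : L →ₗ[F] L →ₗ[F] L) (A B : Submodule F L) : Prop :=
  A ≤ B ∧ ∀ x ∈ A, ∀ y ∈ B, br x y ∈ A ∧ br y x ∈ A

/-- `A` is an ideal of `L`. -/
def IsLeibIdeal (br : L →ₗ[F] L →ₗ[F] L) (A : Submodule F L) : Prop :=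
  IsIdealOf br A ⊤

/-- `C` is a subideal of the subalgebra `K`: there is a chain
`C = C_0 ⊆ C_1 ⊆ ... ⊆ C_n = K` with each term an ideal of the next. -/
def IsSubidealOf (br : L →ₗ[F] L →ₗ[F] L) (C K : Submodule F L) : Prop :=
  ∃ (n : ℕ) (ch : ℕ → Submodule F L), ch 0 = C ∧ ch n = K ∧
    ∀ i < n, IsIdealOf br (ch i) (ch (i + 1))

/-- `C` is a subideal of `L`. -/
def IsSubideal (br : L →ₗ[F] L →ₗ[F] L) (C : Submodule F L) : Prop :=
  IsSubidealOf br C ⊤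

/-- The core of `B` in the subalgebra `K`: the largest ideal of `K` contained in `B`. -/
def leibCoreIn (br : L →ₗ[F] L →ₗ[F] L) (K B : Submodule F L) : Submodule F L :=
  sSup {A | IsIdealOf br A K ∧ A ≤ B}

/-- `B_L`, the largest ideal of `L` contained in `B`. -/
def leibCore (br : L →ₗ[F] L →ₗ[F] L) (B : Submodule F L) : Submodule F L :=
  leibCoreIn br ⊤ B

/-- `B` is a c-ideal of `L`. -/
def IsCIdeal (br : L →ₗ[F] L →ₗ[F] L) (B : Submodule F L) : Prop :=
  IsSubalg br B ∧ ∃ K, IsLeibIdeal br K ∧ B ⊔ K = ⊤ ∧ B ⊓ K ≤ leibCore br B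

/-- `B` is a weak c-ideal of the subalgebra `K`. -/
def IsWeakCIdealOf (br : L →ₗ[F] L →ₗ[F] L) (B K : Submodule F L) : Prop :=
  IsSubalg br B ∧ B ≤ K ∧
    ∃ C, IsSubidealOf br C K ∧ B ⊔ C = K ∧ B ⊓ C ≤ leibCoreIn br K B

/-- `B` is a weak c-ideal of `L`. -/
def IsWeakCIdeal (br : L →ₗ[F] L →ₗ[F] L) (B : Submodule F L) : Prop :=
  IsWeakCIdealOf br B ⊤

/-- The Leibniz kernel `I`, spanned by all squares. -/
def leibnizKernel (br : L →ₗ[F] L →ₗ[F] L) : Submodule F L :=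
  Submodule.span F {y | ∃ x : L, y = br x x}

/-- The span of all brackets `[a,b]` with `a ∈ A`, `b ∈ B`. -/
def brSpan (br : L →ₗ[F] L →ₗ[F] L) (A B : Submodule F L) : Submodule F L :=
  Submodule.span F {z | ∃ x ∈ A, ∃ y ∈ B, z = br x y}

/-- The derived series of the subalgebra `U`. -/
def derSeriesOf (br : L →ₗ[F] L →ₗ[F] L) (U : Submodule F L) : ℕ → Submodule F L
  | 0 => U
  | n + 1 => brSpan br (derSeriesOf br U n) (derSeriesOf br U n)

/-- The subalgebra `U` is solvable. -/
def IsSolvableSub (br : L →ₗ[F] L →ₗ[F] L) (U : Submodule F L) : Prop :=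
  ∃ n, derSeriesOf br U n = ⊥

/-- The lower central series of the subalgebra `U`. -/
def lcsOf (br : L →ₗ[F] L →ₗ[F] L) (U : Submodule F L) : ℕ → Submodule F L
  | 0 => U
  | n + 1 => brSpan br (lcsOf br U n) U

/-- The subalgebra `U` is nilpotent. -/
def IsNilpotentSub (br : L →ₗ[F] L →ₗ[F] L) (U : Submodule F L) : Prop :=
  ∃ n, lcsOf br U n = ⊥

/-- `M` is a maximal (proper) subalgebra of the subalgebra `U`. -/
def IsMaximalSubalgOf (br : L →ₗ[F] L →ₗ[F] L) (M U : Submodule F L) : Prop :=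
  IsSubalg br M ∧ M < U ∧ ∀ K, IsSubalg br K → M ≤ K → K ≤ U → K = M ∨ K = U

/-- `M` is a maximal subalgebra of `L`. -/
def IsMaximalSubalg (br : L →ₗ[F] L →ₗ[F] L) (M : Submodule F L) : Prop :=
  IsMaximalSubalgOf br M ⊤

/-- `U` is a maximal nilpotent subalgebra of `L`. -/
def IsMaximalNilpotentSub (br : L →ₗ[F] L →ₗ[F] L) (U : Submodule F L) : Prop :=
  IsSubalg br U ∧ IsNilpotentSub br U ∧
    ∀ V, IsSubalg br V → IsNilpotentSub br V → U ≤ V → V = U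

/-- `H` is a Cartan subalgebra of the subalgebra `S`: a nilpotent subalgebra
that is self-normalizing in `S`. -/
def IsCartanSubalgOf (br : L →ₗ[F] L →ₗ[F] L) (H S : Submodule F L) : Prop :=
  IsSubalg br H ∧ H ≤ S ∧ IsNilpotentSub br H ∧
    ∀ x ∈ S, (∀ c ∈ H, br x c ∈ H ∧ br c x ∈ H) → x ∈ H

/-- `H` is a Cartan subalgebra of `L`. -/
def IsCartanSubalg (br : L →ₗ[F] L →ₗ[F] L) (H : Submodule F L) : Prop :=
  IsCartanSubalgOf br H ⊤

/-- The Frattini subalgebra of the subalgebra `C`: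
the intersection of the maximal subalgebras of `C`. -/
def frattiniIn (br : L →ₗ[F] L →ₗ[F] L) (C : Submodule F L) : Submodule F L :=
  sInf {M | IsMaximalSubalgOf br M C}

/-- The Frattini subalgebra `F(L)`. -/
def frattiniSubalg (br : L →ₗ[F] L →ₗ[F] L) : Submodule F L :=
  frattiniIn br ⊤

/-- The Frattini ideal `φ(L)`. -/
def frattiniIdeal (br : L →ₗ[F] L →ₗ[F] L) : Submodule F L :=
  leibCore br (frattiniSubalg br)

/-- `L` is supersolvable: there is a chain of ideals of `L` from `0` to `L`
each of codimension one in the next. -/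
def IsSupersolvable (br : L →ₗ[F] L →ₗ[F] L) : Prop :=
  ∃ (n : ℕ) (ch : ℕ → Submodule F L), ch 0 = ⊥ ∧ ch n = ⊤ ∧
    (∀ i ≤ n, IsLeibIdeal br (ch i)) ∧
    ∀ i < n, ch i ≤ ch (i + 1) ∧
      Module.finrank F (ch (i + 1)) = Module.finrank F (ch i) + 1

/-- A subalgebra is abelian if all brackets of its elements vanish. -/
def IsAbelianSub (br : L →ₗ[F] L →ₗ[F] L) (A : Submodule F L) : Prop :=
  ∀ x ∈ A, ∀ y ∈ A, br x y = 0

/-- `A` is a minimal abelian ideal of `L`. -/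
def IsMinimalAbelianIdeal (br : L →ₗ[F] L →ₗ[F] L) (A : Submodule F L) : Prop :=
  IsLeibIdeal br A ∧ A ≠ ⊥ ∧ IsAbelianSub br A ∧
    ∀ A', IsLeibIdeal br A' → A' ≤ A → A' = ⊥ ∨ A' = A

/-- The abelian socle `Asoc(L)`: the sum of the minimal abelian ideals of `L`. -/
def abelianSocle (br : L →ₗ[F] L →ₗ[F] L) : Submodule F L :=
  sSup {A | IsMinimalAbelianIdeal br A}

theorem isLeibIdeal_sSup (br : L →ₗ[F] L →ₗ[F] L) (S : Set (Submodule F L))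
    (h : ∀ A ∈ S, IsLeibIdeal br A) : IsLeibIdeal br (sSup S) := by
  refine ⟨le_top, fun x hx y _ => ?_⟩
  let P : Submodule F L :=
    { carrier := {a | br a y ∈ sSup S ∧ br y a ∈ sSup S}
      zero_mem' := by simp
      add_mem' := by
        rintro a b ⟨ha1, ha2⟩ ⟨hb1, hb2⟩
        constructor
        · simpa [map_add, LinearMap.add_apply] using add_mem ha1 hb1
        · simpa [map_add] using add_mem ha2 hb2
      smul_mem' := by
        rintro c a ⟨ha1, ha2⟩
        constructor
        · simpa [map_smul, LinearMap.smul_apply] using smul_mem _ c ha1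
        · simpa [map_smul] using smul_mem _ c ha2 }
  have hP : sSup S ≤ P := by
    refine sSup_le fun A hA a ha => ?_
    exact ⟨le_sSup hA ((h A hA).2 a ha y trivial).1,
           le_sSup hA ((h A hA).2 a ha y trivial).2⟩
  exact hP hx

theorem leibCore_isIdeal (br : L →ₗ[F] L →ₗ[F] L) (B : Submodule F L) :
    IsLeibIdeal br (leibCore br B) :=
  isLeibIdeal_sSup br _ fun _ hA => hA.1

/-- The bracket induced on the quotient of `L` by an ideal `A`. -/
def quotBr (br : L →ₗ[F] L →ₗ[F] L) (A : Submodule F L) (hA : IsLeibIdeal br A) :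
    (L ⧸ A) →ₗ[F] (L ⧸ A) →ₗ[F] (L ⧸ A) :=
  Submodule.liftQ A
    { toFun := fun x => Submodule.liftQ A (A.mkQ.comp (br x))
        (fun a ha => by
          simp only [LinearMap.mem_ker, LinearMap.comp_apply, Submodule.mkQ_apply,
            Submodule.Quotient.mk_eq_zero]
          exact (hA.2 a ha x trivial).2)
      map_add' := fun x y => by
        apply Submodule.linearMap_qext
        ext z
        simp [map_add]
      map_smul' := fun c x => by
        apply Submodule.linearMap_qext
        ext z
        simp [map_smul] }
    (fun a ha => by
      simp only [LinearMap.mem_ker]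
      apply Submodule.linearMap_qext
      ext z
      simp only [LinearMap.coe_mk, AddHom.coe_mk, LinearMap.comp_apply, Submodule.mkQ_apply,
        Submodule.liftQ_apply, LinearMap.zero_comp, LinearMap.zero_apply,
        Submodule.Quotient.mk_eq_zero]
      exact (hA.2 a ha z trivial).1)

/-- `B` is an almost abelian Lie subalgebra: `B = Fx ∔ D` with `D` abelian and
`[d,x] = -[x,d] = d` for all `d ∈ D`, all other products zero. -/
def IsAlmostAbelianLie (br : L →ₗ[F] L →ₗ[F] L) (B : Submodule F L) : Prop :=
  ∃ (x : L) (D : Submodule F L), x ∉ D ∧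
    Submodule.span F {x} ⊔ D = B ∧ IsAbelianSub br D ∧ br x x = 0 ∧
    (∀ d ∈ D, br d x = d) ∧ (∀ d ∈ D, br x d = -d)

section Helpers

variable {br : L →ₗ[F] L →ₗ[F] L}

theorem br_mem_brSpan {S T : Submodule F L} {a b : L} (ha : a ∈ S) (hb : b ∈ T) :
    br a b ∈ brSpan br S T :=
  subset_span ⟨a, ha, b, hb, rfl⟩

theorem br_mem_derived (a b : L) : br a b ∈ brSpan br ⊤ ⊤ :=
  br_mem_brSpan mem_top mem_top

/-- Elements of `[L,L]` anticommute with all of `L`: subtract the left from the right Leibniz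
identity. -/
theorem derived_anticomm (hbr : IsSymmetricLeibnizBracket br) {w : L}
    (hw : w ∈ brSpan br ⊤ ⊤) (a : L) : br a w = - br w a := by
  induction hw using span_induction with
  | mem w h =>
    obtain ⟨x, -, y, -, rfl⟩ := h
    have h1 := hbr.1 x a y
    have h2 := hbr.2.1 x a y
    rw [h1, sub_eq_add_neg, add_left_cancel_iff] at h2
    exact h2.symm
  | zero => simp
  | add u v _ _ hu hv => simp only [map_add, LinearMap.add_apply, hu, hv]; abel
  | smul c u _ hu => simp [hu]

/-- The polarised terms cancel by anticommutation, so this holds in characteristic two as well. -/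
theorem derived_sq (hbr : IsSymmetricLeibnizBracket br) {w : L}
    (hw : w ∈ brSpan br ⊤ ⊤) : br w w = 0 := by
  induction hw using span_induction with
  | mem w h =>
    obtain ⟨x, -, y, -, rfl⟩ := h
    exact hbr.2.2 x y
  | zero => simp
  | add u v _ hv' hu hv =>
    simp [map_add, LinearMap.add_apply, hu, hv, derived_anticomm hbr hv' u]
  | smul c u _ hu => simp [hu]

/-- A line in `[L,L]` stable under right multiplications is an ideal. -/
theorem isLeibIdeal_span_singleton (hbr : IsSymmetricLeibnizBracket br) {w : L}
    (hw : w ∈ brSpan br ⊤ ⊤) (h : ∀ y, br w y ∈ span F {w}) : IsLeibIdeal br (span F {w}) := by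
  refine ⟨le_top, fun u hu y _ => ?_⟩
  obtain ⟨c, rfl⟩ := mem_span_singleton.1 hu
  simp only [map_smul, LinearMap.smul_apply, derived_anticomm hbr hw y]
  exact ⟨smul_mem _ _ (h y), smul_mem _ _ (neg_mem (h y))⟩

theorem isLeibIdeal_of_derived_le {K : Submodule F L} (h : brSpan br ⊤ ⊤ ≤ K) :
    IsLeibIdeal br K :=
  ⟨le_top, fun x _ y _ => ⟨h (br_mem_derived x y), h (br_mem_derived y x)⟩⟩

/-- An ideal complementing (up to intersection) the line of a square-zero element contains
`[L,L]`. -/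
theorem derived_le_of_sup_eq_top {K : Submodule F L} (hK : IsLeibIdeal br K) {w : L}
    (hw : br w w = 0) (h : span F {w} ⊔ K = ⊤) : brSpan br ⊤ ⊤ ≤ K := by
  refine span_le.2 ?_
  rintro _ ⟨a, -, b, -, rfl⟩
  obtain ⟨u, hu, k, hk, rfl⟩ := mem_sup.1 (h ▸ mem_top : a ∈ span F {w} ⊔ K)
  obtain ⟨v, hv, k', hk', rfl⟩ := mem_sup.1 (h ▸ mem_top : b ∈ span F {w} ⊔ K)
  obtain ⟨c, rfl⟩ := mem_span_singleton.1 hu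
  obtain ⟨d, rfl⟩ := mem_span_singleton.1 hv
  have h1 : br (c • w + k) (d • w + k') = br (c • w) k' + br k (d • w + k') := by
    simp [hw]
  rw [SetLike.mem_coe, h1]
  exact add_mem (hK.2 k' hk' _ mem_top).2 (hK.2 k hk _ mem_top).1

theorem cIdeal_iff (hbr : IsSymmetricLeibnizBracket br) :
    (∀ x : L, x ≠ 0 → IsSubalg br (span F {x}) → IsCIdeal br (span F {x})) ↔
      ∀ w ∈ brSpan br ⊤ ⊤, ∀ y, br w y ∈ span F {w} := by
  constructor
  · intro H w hw y
    by_cases hw0 : w = 0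
    · simp [hw0]
    have hsub : IsSubalg br (span F {w}) := by
      intro u hu v hv
      obtain ⟨c, rfl⟩ := mem_span_singleton.1 hu
      obtain ⟨d, rfl⟩ := mem_span_singleton.1 hv
      simp [derived_sq hbr hw]
    obtain ⟨-, K, hK, htop, hcore⟩ := H w hw0 hsub
    have hwK : w ∈ K := derived_le_of_sup_eq_top hK (derived_sq hbr hw) htop hw
    have hc : w ∈ leibCore br (span F {w}) := hcore ⟨mem_span_singleton_self w, hwK⟩
    have hle : leibCore br (span F {w}) ≤ span F {w} := sSup_le fun _ hA => hA.2
    exact hle ((leibCore_isIdeal br _).2 w hc y mem_top).1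
  · intro H x hx hsub
    refine ⟨hsub, ?_⟩
    by_cases hxW : x ∈ brSpan br ⊤ ⊤
    · have hI := isLeibIdeal_span_singleton hbr hxW (H x hxW)
      exact ⟨⊤, isLeibIdeal_of_derived_le le_top, sup_top_eq _,
        inf_le_left.trans (le_sSup ⟨hI, le_rfl⟩)⟩
    · obtain ⟨K, hWK, hK⟩ :=
        (disjoint_span_singleton_of_notMem hxW).exists_isCompl
      exact ⟨K, isLeibIdeal_of_derived_le hWK, hK.symm.sup_eq_top,
        by rw [hK.symm.inf_eq_bot]; exact bot_le⟩

/-- If every vector of `[L,L]` is an eigenvector of every right multiplication, each right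
multiplication acts on `[L,L]` as a scalar. -/
theorem exists_scalar (H : ∀ w ∈ brSpan br ⊤ ⊤, ∀ y, br w y ∈ span F {w}) (y : L) :
    ∃ c : F, ∀ w ∈ brSpan br ⊤ ⊤, br w y = c • w := by
  let f : brSpan br ⊤ ⊤ →ₗ[F] brSpan br ⊤ ⊤ :=
    (br.flip y).restrict fun w _ => br_mem_derived w y
  have hf : ∀ v, (f v : L) = br v y := fun _ => rfl
  obtain ⟨c, hc⟩ := f.exists_eq_smul_id_of_forall_notLinearIndependent fun v => by
    obtain ⟨a, ha⟩ := mem_span_singleton.1 (H v v.2 y)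
    rw [LinearIndependent.pair_iff]
    intro h
    have := h a (-1) (Subtype.ext (by simp [hf, ha]))
    simp at this
  refine ⟨c, fun w hw => ?_⟩
  have h := congrArg Subtype.val (LinearMap.congr_fun hc ⟨w, hw⟩)
  rw [hf] at h
  simpa using h

/-- If some `x` acts as the identity on `[L,L]`, all squares vanish. -/
theorem sq_eq_zero_of_id (hbr : IsSymmetricLeibnizBracket br) {x : L}
    (hx : ∀ w ∈ brSpan br ⊤ ⊤, br w x = w) (y : L) : br y y = 0 := by
  have h := hbr.2.1 x y y
  rw [derived_anticomm hbr (br_mem_derived x y) y,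
    derived_anticomm hbr (br_mem_derived y y) x, hx _ (br_mem_derived y y)] at h
  simpa using h

/-- The structure of `L` when `x` acts as the identity on `[L,L]` and every element of `L` acts
on `[L,L]` as a scalar. -/
theorem exists_decomposition (hbr : IsSymmetricLeibnizBracket br) {x w₀ : L}
    (hw₀ : w₀ ∈ brSpan br ⊤ ⊤) (hw₀' : w₀ ≠ 0)
    (hs : ∀ y, ∃ c : F, ∀ w ∈ brSpan br ⊤ ⊤, br w y = c • w)
    (hx : ∀ w ∈ brSpan br ⊤ ⊤, br w x = w) :
    ∃ A B : Submodule F L, IsLeibIdeal br A ∧ IsAbelianSub br A ∧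
        IsLeibIdeal br B ∧ IsAlmostAbelianLie br B ∧
        A ⊔ B = ⊤ ∧ A ⊓ B = ⊥ := by
  set W := brSpan br ⊤ ⊤ with hW
  have hsq := sq_eq_zero_of_id hbr hx
  have hanti : ∀ a b, br a b = - br b a := by
    intro a b
    have := hsq (a + b)
    simp only [map_add, LinearMap.add_apply, hsq, zero_add, add_zero] at this
    rw [add_comm] at this
    exact eq_neg_of_add_eq_zero_left this
  have hmem : ∀ a b, br a b ∈ W := br_mem_derived
  -- The annihilator of `W`.
  let K : Submodule F L :=
    { carrier := {k | ∀ w ∈ W, br w k = 0}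
      zero_mem' := by simp
      add_mem' := fun ha hb w hw => by simp [ha w hw, hb w hw]
      smul_mem' := fun c a ha w hw => by simp [ha w hw] }
  have hKdec : ∀ y, ∃ c : F, y - c • x ∈ K := by
    intro y
    obtain ⟨c, hc⟩ := hs y
    exact ⟨c, fun w hw => by simp [hc w hw, hx w hw]⟩
  have hWK : W ≤ K := by
    refine span_le.2 ?_
    rintro _ ⟨a, -, b, -, rfl⟩ w hw
    obtain ⟨c, hc⟩ := hs a
    obtain ⟨d, hd⟩ := hs b
    rw [hbr.1 w a b, hc w hw, hd w hw]
    simp [hc w hw, hd w hw, smul_comm c d]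
  have hKK : ∀ k ∈ K, ∀ k' ∈ K, br k k' = 0 := by
    intro k hk k' hk'
    have h := hbr.1 k k' x
    rw [hanti k (br k' x), hk _ (hmem _ _), hx _ (hmem _ _), hk' _ (hmem _ _)] at h
    simpa using h.symm
  have hxK : x ∉ K := fun h => hw₀' (by rw [← hx w₀ hw₀, h w₀ hw₀])
  let A : Submodule F L := K ⊓ LinearMap.ker (br.flip x)
  have hA : ∀ a ∈ A, ∀ y, br a y = 0 := by
    rintro a ⟨haK, hax⟩ y
    have hax' : br a x = 0 := by simpa using hax
    obtain ⟨c, hc⟩ := hKdec y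
    have : br a y = br a (y - c • x) + c • br a x := by simp
    rw [this, hKK a haK _ hc, hax']
    simp
  refine ⟨A, span F {x} ⊔ W, ⟨le_top, fun a ha y _ => ?_⟩, fun a ha b _ => hA a ha b,
    isLeibIdeal_of_derived_le le_sup_right,
    ⟨x, W, fun h => hxK (hWK h), rfl, fun u hu v hv => hWK hv u hu, hsq x, hx,
      fun d hd => by rw [hanti, hx d hd]⟩, ?_, ?_⟩
  · rw [hanti y a, hA a ha y]
    simp
  · refine eq_top_iff.2 fun y _ => ?_
    obtain ⟨c, hc⟩ := hKdec y
    -- Split the component in `K` by the projection `k ↦ [k,x]`.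
    refine mem_sup.2 ⟨(y - c • x) - br (y - c • x) x, ⟨sub_mem hc (hWK (hmem _ _)), ?_⟩,
      c • x + br (y - c • x) x, add_mem (mem_sup_left (smul_mem _ _ (mem_span_singleton_self x)))
        (mem_sup_right (hmem _ _)), by abel⟩
    rw [SetLike.mem_coe, LinearMap.mem_ker, LinearMap.flip_apply, map_sub, LinearMap.sub_apply,
      hx _ (hmem _ _), sub_self]
  · refine eq_bot_iff.2 ?_
    rintro a ⟨ha, hB⟩
    obtain ⟨u, hu, w, hw, rfl⟩ := mem_sup.1 hB
    obtain ⟨c, rfl⟩ := mem_span_singleton.1 hu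
    -- Bracketing with `x` kills `a` but fixes its component `w` in `W`.
    have h0 := hA _ ha x
    simp only [map_add, map_smul, LinearMap.add_apply, LinearMap.smul_apply, hsq, hx w hw,
      smul_zero, zero_add] at h0
    subst h0
    have hcx : c • x ∈ K := by simpa using ha.1
    have hc : c = 0 := by
      have := hcx w₀ hw₀
      rw [map_smul, hx w₀ hw₀] at this
      exact (smul_eq_zero.1 this).resolve_right hw₀'
    simp [hc]

/-- In `L = A ⊕ B` with `A` abelian and `B = Fx + D` almost abelian, `[L,L] ⊆ D` and `L` acts on
`D` by scalars. -/
theorem br_mem_span_of_decomposition {A B : Submodule F L} (hA : IsLeibIdeal br A)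
    (hAab : IsAbelianSub br A) (hB : IsLeibIdeal br B) (hBaa : IsAlmostAbelianLie br B)
    (htop : A ⊔ B = ⊤) (hbot : A ⊓ B = ⊥) :
    ∀ w ∈ brSpan br ⊤ ⊤, ∀ y, br w y ∈ span F {w} := by
  obtain ⟨x, D, -, rfl, hD, hxx, hdx, hxd⟩ := hBaa
  have hAB : ∀ a ∈ A, ∀ b ∈ span F {x} ⊔ D, br a b = 0 ∧ br b a = 0 := by
    intro a ha b hb
    have h1 : br a b ∈ A ⊓ (span F {x} ⊔ D) :=
      ⟨(hA.2 a ha b mem_top).1, (hB.2 b hb a mem_top).2⟩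
    have h2 : br b a ∈ A ⊓ (span F {x} ⊔ D) :=
      ⟨(hA.2 a ha b mem_top).2, (hB.2 b hb a mem_top).1⟩
    rw [hbot] at h1 h2
    exact ⟨by simpa using h1, by simpa using h2⟩
  have hdec : ∀ y : L, ∃ a ∈ A, ∃ c : F, ∃ d ∈ D, y = a + (c • x + d) := by
    intro y
    obtain ⟨a, ha, b, hb, rfl⟩ := mem_sup.1 (htop ▸ mem_top : y ∈ A ⊔ (span F {x} ⊔ D))
    obtain ⟨u, hu, d, hd, rfl⟩ := mem_sup.1 hb
    obtain ⟨c, rfl⟩ := mem_span_singleton.1 hu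
    exact ⟨a, ha, c, d, hd, rfl⟩
  have hxB : x ∈ span F {x} ⊔ D := mem_sup_left (mem_span_singleton_self x)
  have hDB : ∀ d ∈ D, d ∈ span F {x} ⊔ D := fun d hd => mem_sup_right hd
  have hWD : brSpan br ⊤ ⊤ ≤ D := by
    refine span_le.2 ?_
    rintro _ ⟨y, -, z, -, rfl⟩
    obtain ⟨a, ha, c, d, hd, rfl⟩ := hdec y
    obtain ⟨a', ha', c', d', hd', rfl⟩ := hdec z
    have : br (a + (c • x + d)) (a' + (c' • x + d')) = c' • d - c • d' := by
      simp only [map_add, map_smul, LinearMap.add_apply, LinearMap.smul_apply, hAab a ha a' ha',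
        (hAB a ha x hxB).1, (hAB a' ha' x hxB).2, (hAB a ha d' (hDB d' hd')).1,
        (hAB a' ha' d (hDB d hd)).2, hxx, hdx d hd, hxd d' hd', hD d hd d' hd', smul_zero,
        smul_neg, add_zero, sub_eq_add_neg, add_comm]
    rw [SetLike.mem_coe, this]
    exact sub_mem (smul_mem _ _ hd) (smul_mem _ _ hd')
  intro w hw y
  obtain ⟨a, ha, c, d, hd, rfl⟩ := hdec y
  have hwD := hWD hw
  refine mem_span_singleton.2 ⟨c, ?_⟩
  simp [(hAB a ha w (hDB w hwD)).2, hdx w hwD, hD w hwD d hd]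

end Helpers

/-- in a symmetric Leibniz algebra, all one-dimensional
subalgebras are c-ideals iff `L³ = 0` or `L = A ⊕ B` with `A` an abelian
ideal and `B` an almost abelian Lie ideal. -/
theorem symmetric_one_dim_cIdeal_iff (br : L →ₗ[F] L →ₗ[F] L)
    (hbr : IsSymmetricLeibnizBracket br) [FiniteDimensional F L] :
    (∀ x : L, x ≠ 0 → IsSubalg br (Submodule.span F {x}) →
        IsCIdeal br (Submodule.span F {x})) ↔
    (brSpan br (brSpan br ⊤ ⊤) ⊤ = ⊥ ∨
      ∃ A B : Submodule F L, IsLeibIdeal br A ∧ IsAbelianSub br A ∧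
        IsLeibIdeal br B ∧ IsAlmostAbelianLie br B ∧
        A ⊔ B = ⊤ ∧ A ⊓ B = ⊥) := by
  rw [cIdeal_iff hbr]
  constructor
  · intro H
    have hs := exists_scalar H
    by_cases h0 : ∀ w ∈ brSpan br ⊤ ⊤, ∀ y, br w y = 0
    · left
      refine span_eq_bot.2 ?_
      rintro _ ⟨w, hw, y, -, rfl⟩
      exact h0 w hw y
    · right
      push Not at h0
      obtain ⟨w₀, hw₀, y, hy⟩ := h0
      obtain ⟨c, hc⟩ := hs y
      have hc0 : c ≠ 0 := by
        rintro rfl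
        exact hy (by simp [hc w₀ hw₀])
      have hw₀' : w₀ ≠ 0 := by
        rintro rfl
        exact hy (by simp)
      exact exists_decomposition (x := c⁻¹ • y) hbr hw₀ hw₀' hs
        fun w hw => by simp [hc w hw, hc0]
  · rintro (h | ⟨A, B, hA, hAab, hB, hBaa, htop, hbot⟩)
    · intro w hw y
      have : br w y ∈ brSpan br (brSpan br ⊤ ⊤) ⊤ := br_mem_brSpan hw mem_top
      rw [h, mem_bot] at this
      simp [this]
    · exact br_mem_span_of_decomposition hA hAab hB hBaa htop hbot
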